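/- arXiv:1511.00428 — 2 statements merged into one kernel-verified Lean document; each statement's English description precedes it below -/
import Mathlib

section
/- Let R_d ∈ SO(3) be fixed and let K_p = diag(λ₁,λ₂,λ₃) with λ₁,λ₂,λ₃ > 0. Then the function V : SO(3) → ℝ defined by V(R) = trace(K_p(I₃ − R_dᵀR)) satisfies V(R) ≥ 0 for all R ∈ SO(3), and V(R) = 0 if and only if R = R_d. -/
open Matrix

/-!
Completing the square: if `R` and `S` have orthonormal columns and `K` is Hermitian, then
`2 Re tr (K (1 - Sᴴ R)) = tr ((R - S) K (R - S)ᴴ)`. For positive definite `K` the right-hand side is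
the square of a norm of `R - S`, the Frobenius norm weighted by `K`.
-/

section

variable {m n α : Type*} [Fintype m] [Fintype n]

lemma trace_mul_mul_conjTranspose_eq_sum [NonUnitalSemiring α] [Star α]
    (B : Matrix m n α) (K : Matrix n n α) :
    trace (B * K * Bᴴ) = ∑ i, B i ⬝ᵥ (K *ᵥ star (B i)) := by
  simp only [trace, dotProduct_mulVec]
  rfl

lemma trace_mul_mul_conjTranspose_eq_zero_iff_of_posDef [Ring α] [PartialOrder α]
    [IsOrderedAddMonoid α] [StarRing α] {K : Matrix n n α} (hK : K.PosDef) (B : Matrix m n α) :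
    trace (B * K * Bᴴ) = 0 ↔ B = 0 := by
  have row_nonneg (i : m) : 0 ≤ B i ⬝ᵥ (K *ᵥ star (B i)) := by
    simpa only [star_star] using hK.posSemidef.dotProduct_mulVec_nonneg (star (B i))
  have row_pos {i : m} (hi : B i ≠ 0) : 0 < B i ⬝ᵥ (K *ᵥ star (B i)) := by
    simpa only [star_star] using hK.dotProduct_mulVec_pos (star_ne_zero.mpr hi)
  refine ⟨fun h ↦ ?_, fun h ↦ by simp [h]⟩
  rw [trace_mul_mul_conjTranspose_eq_sum,
    Finset.sum_eq_zero_iff_of_nonneg fun i _ ↦ row_nonneg i] at h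
  funext i
  by_contra row_ne_zero
  exact (row_pos row_ne_zero).ne' (h i (Finset.mem_univ i))

lemma trace_mul_one_sub_add_star_eq_trace_sub_mul_mul_conjTranspose [DecidableEq n] [CommRing α]
    [StarRing α] {K : Matrix n n α} (hK : K.IsHermitian) {R S : Matrix m n α}
    (hR : Rᴴ * R = 1) (hS : Sᴴ * S = 1) :
    trace (K * (1 - Sᴴ * R)) + star (trace (K * (1 - Sᴴ * R))) =
      trace ((R - S) * K * (R - S)ᴴ) := by
  have star_trace : star (trace (K * (1 - Sᴴ * R))) = trace (K * (1 - Rᴴ * S)) := by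
    rw [← trace_conjTranspose, conjTranspose_mul, hK.eq, trace_mul_comm]
    simp only [conjTranspose_sub, conjTranspose_one, conjTranspose_mul, conjTranspose_conjTranspose]
  have gram_sub : (R - S)ᴴ * (R - S) = (1 - Sᴴ * R) + (1 - Rᴴ * S) := by
    rw [conjTranspose_sub, Matrix.sub_mul, Matrix.mul_sub, Matrix.mul_sub, hR, hS]
    abel
  calc
    _ = trace (K * ((1 - Sᴴ * R) + (1 - Rᴴ * S))) := by rw [star_trace, Matrix.mul_add, trace_add]
    _ = trace (K * (R - S)ᴴ * (R - S)) := by rw [← gram_sub, Matrix.mul_assoc]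
    _ = trace ((R - S) * K * (R - S)ᴴ) := trace_mul_cycle _ _ _

end

open scoped ComplexOrder in
theorem modified_trace_error_nonneg_and_eq_zero_iff_general {m n 𝕜 : Type*} [Fintype m] [Fintype n]
    [DecidableEq n] [RCLike 𝕜] {K : Matrix n n 𝕜} (hK : K.PosDef) {R S : Matrix m n 𝕜}
    (hR : Rᴴ * R = 1) (hS : Sᴴ * S = 1) :
    0 ≤ RCLike.re (trace (K * (1 - Sᴴ * R))) ∧
      (RCLike.re (trace (K * (1 - Sᴴ * R))) = 0 ↔ R = S) := by
  have two_mul_re_eq : ((2 * RCLike.re (trace (K * (1 - Sᴴ * R))) : ℝ) : 𝕜) =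
      trace ((R - S) * K * (R - S)ᴴ) := by
    rw [← trace_mul_one_sub_add_star_eq_trace_sub_mul_mul_conjTranspose hK.isHermitian hR hS]
    push_cast
    exact (RCLike.add_conj _).symm
  constructor
  · have trace_nonneg := (hK.posSemidef.mul_mul_conjTranspose_same (R - S)).trace_nonneg
    rw [← two_mul_re_eq, RCLike.ofReal_nonneg] at trace_nonneg
    linarith
  · rw [← sub_eq_zero (a := R), ← trace_mul_mul_conjTranspose_eq_zero_iff_of_posDef hK,
      ← two_mul_re_eq, RCLike.ofReal_eq_zero, mul_eq_zero_iff_left two_ne_zero]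

/-- The modified trace error function `V(R) = trace (K_p (I - R_dᵀ R))` on `SO(3)`
(where `K_p = diag (λ₁, λ₂, λ₃)` with positive entries) is nonnegative, and it
vanishes exactly at `R = R_d`. -/
theorem modified_trace_error_nonneg_and_eq_zero_iff
    (Rd : Matrix (Fin 3) (Fin 3) ℝ) (hRd : Rdᵀ * Rd = 1) (hRdDet : Rd.det = 1)
    (lam : Fin 3 → ℝ) (hlam : ∀ i, 0 < lam i) :
    ∀ R : Matrix (Fin 3) (Fin 3) ℝ, Rᵀ * R = 1 → R.det = 1 →
      (0 ≤ Matrix.trace (Matrix.diagonal lam * (1 - Rdᵀ * R)) ∧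
        (Matrix.trace (Matrix.diagonal lam * (1 - Rdᵀ * R)) = 0 ↔ R = Rd)) := by
  intro R hR _
  exact modified_trace_error_nonneg_and_eq_zero_iff_general (.diagonal hlam) hR hRd
end

section
/- Let M be a symmetric positive definite 3×3 matrix, K_p = diag(λ₁,λ₂,λ₃) with λᵢ > 0, R_d ∈ SO(3) and ω_d ∈ ℝ³. Then the function H(R_s, ω_s) = trace(K_p(I₃ − R_dᵀR_s)) + ½ e_ωᵀ M e_ω, with e_ω = ω_s − (R_dᵀR_s)ᵀω_d, satisfies H(R_s, ω_s) ≥ 0 for all (R_s, ω_s) ∈ SO(3) × ℝ³, with equality if and only if R_s = R_d and ω_s = ω_d. -/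
open Matrix

/-!
For a unitary `Q` one has `(1 - Q) (1 - Q)ᴴ = (1 - Q) + (1 - Q)ᴴ`. Taking traces against a
Hermitian gain `K` gives `2 re tr (K (1 - Q)) = tr ((1 - Q)ᴴ K (1 - Q))`, so for positive definite
`K` the modified trace error is half a squared distance from `Q = R_dᴴ R_s` to the identity. Hence
it is nonnegative and vanishes only at `Q = 1`, where moreover the velocity error reduces to
`ω_s - ω_d`.
-/

theorem star_mul_eq_one_iff_of_mem_unitary {R : Type*} [Monoid R] [StarMul R] {u v : R}
    (hu : u ∈ unitary R) : star u * v = 1 ↔ v = u := by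
  refine ⟨fun h ↦ ?_, fun h ↦ h ▸ hu.1⟩
  rw [← mul_one u, ← h, ← mul_assoc, hu.2, one_mul]

theorem one_sub_mul_star_one_sub_of_mem_unitary {R : Type*} [Ring R] [StarRing R] {u : R}
    (hu : u ∈ unitary R) :
    (1 - u) * star (1 - u) = (1 - u) + star (1 - u) := by
  simp only [star_sub, star_one, mul_sub, sub_mul, hu.2, one_mul, mul_one]
  abel

section PosDef

variable {m n R : Type*} [Fintype m] [Fintype n]

theorem trace_conjTranspose_mul_mul_same [NonUnitalSemiring R] [StarRing R]
    (K : Matrix n n R) (A : Matrix n m R) :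
    (Aᴴ * K * A).trace = ∑ j, star (A.col j) ⬝ᵥ (K *ᵥ A.col j) := by
  simp only [dotProduct_mulVec]
  rfl

variable [Ring R] [StarRing R] [PartialOrder R] {K : Matrix n n R} {A : Matrix n m R} {x : n → R}

theorem dotProduct_mulVec_eq_zero_iff_of_posDef (hK : K.PosDef) :
    star x ⬝ᵥ (K *ᵥ x) = 0 ↔ x = 0 := by
  refine ⟨fun h ↦ ?_, fun h ↦ by simp [h]⟩
  by_contra hx
  exact (hK.dotProduct_mulVec_pos hx).ne' h

theorem trace_conjTranspose_mul_mul_same_eq_zero_iff [IsOrderedAddMonoid R] (hK : K.PosDef) :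
    (Aᴴ * K * A).trace = 0 ↔ A = 0 := by
  rw [trace_conjTranspose_mul_mul_same, Finset.sum_eq_zero_iff_of_nonneg
    fun _ _ ↦ hK.posSemidef.dotProduct_mulVec_nonneg _]
  simp only [Finset.mem_univ, true_imp_iff, dotProduct_mulVec_eq_zero_iff_of_posDef hK]
  exact ⟨fun h ↦ ext_col h, fun h _ ↦ h ▸ rfl⟩

end PosDef

section RCLike

open scoped ComplexOrder

variable {n 𝕜 : Type*} [Fintype n] [RCLike 𝕜]
  {K M Rd Rs : Matrix n n 𝕜} {e ωd ωs : n → 𝕜}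

theorem re_eq_zero_iff_of_nonneg {z : 𝕜} (hz : 0 ≤ z) : RCLike.re z = 0 ↔ z = 0 := by
  rw [RCLike.ext_iff (K := 𝕜), map_zero, map_zero, and_iff_left (RCLike.nonneg_iff.mp hz).2]

theorem re_trace_mul_conjTranspose_of_isHermitian (hK : K.IsHermitian) (A : Matrix n n 𝕜) :
    RCLike.re (K * Aᴴ).trace = RCLike.re (K * A).trace := by
  rw [← RCLike.conj_re (K * A).trace, starRingEnd_apply, ← trace_conjTranspose,
    conjTranspose_mul, hK.eq, trace_mul_comm]

/-- The kinetic energy `½ ‖e‖²_M` of an angular velocity (error) `e` in the metric given by the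
inertia matrix `M`. Over `ℂ` the real part makes it real-valued. -/
noncomputable def kineticEnergy (M : Matrix n n 𝕜) (e : n → 𝕜) : ℝ :=
  1 / 2 * RCLike.re (star e ⬝ᵥ (M *ᵥ e))

theorem kineticEnergy_nonneg (hM : M.PosSemidef) : 0 ≤ kineticEnergy M e :=
  mul_nonneg one_half_pos.le (RCLike.nonneg_iff.mp (hM.dotProduct_mulVec_nonneg e)).1

theorem kineticEnergy_eq_zero_iff (hM : M.PosDef) : kineticEnergy M e = 0 ↔ e = 0 := by
  rw [kineticEnergy, mul_eq_zero_iff_left one_half_pos.ne',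
    re_eq_zero_iff_of_nonneg (hM.posSemidef.dotProduct_mulVec_nonneg e),
    dotProduct_mulVec_eq_zero_iff_of_posDef hM]

/-- The angular velocity error `e_ω = ω_s - (R_dᴴ R_s)ᴴ ω_d`: the desired velocity is transported
to the body frame of `R_s` before being compared with `ω_s`. -/
def angularVelocityError (Rd Rs : Matrix n n 𝕜) (ωd ωs : n → 𝕜) : n → 𝕜 :=
  ωs - (Rdᴴ * Rs)ᴴ *ᵥ ωd

variable [DecidableEq n]

theorem angularVelocityError_self (hRd : Rd ∈ unitaryGroup n 𝕜) :
    angularVelocityError Rd Rd ωd ωs = ωs - ωd := by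
  have hQ : Rdᴴ * Rd = 1 := hRd.1
  rw [angularVelocityError, hQ, conjTranspose_one, one_mulVec]

/-- The modified trace error `V = tr (K (1 - R_dᴴ R_s))` of the orientation `R_s` relative to `R_d`,
with gain `K`. Over `ℂ` the real part makes it real-valued. -/
noncomputable def modifiedTraceError (K Rd Rs : Matrix n n 𝕜) : ℝ :=
  RCLike.re (K * (1 - Rdᴴ * Rs)).trace

theorem modifiedTraceError_eq_half_re_trace (hK : K.IsHermitian)
    (hRd : Rd ∈ unitaryGroup n 𝕜) (hRs : Rs ∈ unitaryGroup n 𝕜) :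
    modifiedTraceError K Rd Rs =
      1 / 2 * RCLike.re ((1 - Rdᴴ * Rs)ᴴ * K * (1 - Rdᴴ * Rs)).trace := by
  have hQ : Rdᴴ * Rs ∈ unitaryGroup n 𝕜 := mul_mem (Unitary.star_mem hRd) hRs
  rw [modifiedTraceError]
  set A := 1 - Rdᴴ * Rs
  have hA : A * Aᴴ = A + Aᴴ := one_sub_mul_star_one_sub_of_mem_unitary hQ
  have htwo : RCLike.re (Aᴴ * K * A).trace = 2 * RCLike.re (K * A).trace := by
    rw [trace_mul_cycle, hA, trace_mul_comm, mul_add, trace_add, map_add,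
      re_trace_mul_conjTranspose_of_isHermitian hK, two_mul]
  rw [htwo]
  ring

theorem modifiedTraceError_nonneg (hK : K.PosSemidef)
    (hRd : Rd ∈ unitaryGroup n 𝕜) (hRs : Rs ∈ unitaryGroup n 𝕜) :
    0 ≤ modifiedTraceError K Rd Rs := by
  rw [modifiedTraceError_eq_half_re_trace hK.isHermitian hRd hRs]
  exact mul_nonneg one_half_pos.le
    (RCLike.nonneg_iff.mp (hK.conjTranspose_mul_mul_same _).trace_nonneg).1

theorem modifiedTraceError_eq_zero_iff (hK : K.PosDef)
    (hRd : Rd ∈ unitaryGroup n 𝕜) (hRs : Rs ∈ unitaryGroup n 𝕜) :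
    modifiedTraceError K Rd Rs = 0 ↔ Rs = Rd := by
  rw [modifiedTraceError_eq_half_re_trace hK.isHermitian hRd hRs,
    mul_eq_zero_iff_left one_half_pos.ne',
    re_eq_zero_iff_of_nonneg (hK.posSemidef.conjTranspose_mul_mul_same _).trace_nonneg,
    trace_conjTranspose_mul_mul_same_eq_zero_iff hK, sub_eq_zero, eq_comm]
  exact star_mul_eq_one_iff_of_mem_unitary hRd

/-- The candidate Lyapunov function `H(R_s, ω_s)` for tracking `(R_d, ω_d)`, with orientation gain
`K` and inertia matrix `M`. -/
noncomputable def lyapunovFunction (K M Rd : Matrix n n 𝕜) (ωd : n → 𝕜)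
    (Rs : Matrix n n 𝕜) (ωs : n → 𝕜) : ℝ :=
  modifiedTraceError K Rd Rs + kineticEnergy M (angularVelocityError Rd Rs ωd ωs)

theorem lyapunov_function_posdef_general (hK : K.PosDef) (hM : M.PosDef)
    (hRd : Rd ∈ unitaryGroup n 𝕜) (hRs : Rs ∈ unitaryGroup n 𝕜) (ωd ωs : n → 𝕜) :
    0 ≤ lyapunovFunction K M Rd ωd Rs ωs ∧
      (lyapunovFunction K M Rd ωd Rs ωs = 0 ↔ Rs = Rd ∧ ωs = ωd) := by
  have hV := modifiedTraceError_nonneg hK.posSemidef hRd hRs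
  have hT := kineticEnergy_nonneg hM.posSemidef (e := angularVelocityError Rd Rs ωd ωs)
  refine ⟨add_nonneg hV hT, ?_⟩
  rw [lyapunovFunction, add_eq_zero_iff_of_nonneg hV hT, modifiedTraceError_eq_zero_iff hK hRd hRs,
    kineticEnergy_eq_zero_iff hM]
  refine and_congr_right fun hR ↦ ?_
  rw [hR, angularVelocityError_self hRd, sub_eq_zero]

end RCLike

/-- The candidate Lyapunov function
`H(R_s, ω_s) = trace (K_p (I - R_dᵀ R_s)) + ½ e_ωᵀ M e_ω`, with
`e_ω = ω_s - (R_dᵀ R_s)ᵀ ω_d`, `M` symmetric positive definite and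
`K_p = diag (λ₁, λ₂, λ₃)` with positive entries, is nonnegative on `SO(3) × ℝ³`,
and it vanishes exactly at `(R_d, ω_d)`. -/
theorem lyapunov_function_posdef
    (M : Matrix (Fin 3) (Fin 3) ℝ) (hMsymm : M.IsSymm) (hMpos : M.PosDef)
    (lam : Fin 3 → ℝ) (hlam : ∀ i, 0 < lam i)
    (Rd : Matrix (Fin 3) (Fin 3) ℝ) (hRd : Rdᵀ * Rd = 1) (hRdDet : Rd.det = 1)
    (ωd : Fin 3 → ℝ) :
    ∀ (Rs : Matrix (Fin 3) (Fin 3) ℝ), Rsᵀ * Rs = 1 → Rs.det = 1 →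
      ∀ (ωs : Fin 3 → ℝ),
        (0 ≤ Matrix.trace (Matrix.diagonal lam * (1 - Rdᵀ * Rs)) +
            (1 / 2 : ℝ) *
              ((ωs - (Rdᵀ * Rs)ᵀ *ᵥ ωd) ⬝ᵥ (M *ᵥ (ωs - (Rdᵀ * Rs)ᵀ *ᵥ ωd)))) ∧
          (Matrix.trace (Matrix.diagonal lam * (1 - Rdᵀ * Rs)) +
              (1 / 2 : ℝ) *
                ((ωs - (Rdᵀ * Rs)ᵀ *ᵥ ωd) ⬝ᵥ (M *ᵥ (ωs - (Rdᵀ * Rs)ᵀ *ᵥ ωd))) = 0 ↔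
            Rs = Rd ∧ ωs = ωd) := by
  intro Rs hRs _ ωs
  simpa [lyapunovFunction, modifiedTraceError, kineticEnergy, angularVelocityError] using
    lyapunov_function_posdef_general (PosDef.diagonal hlam) hMpos
      (mem_unitaryGroup_iff'.mpr hRd) (mem_unitaryGroup_iff'.mpr hRs) ωd ωs
end
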